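/- Let q be a prime power and n a positive integer. Then the number of conjugacy classes of GL(n, F_q) is at most q^n. Equivalently, the number of irreducible complex characters of GL(n, F_q) is at most q^n. -/

import Mathlib

open Matrix

def IsIrrChar (G : Type) [Group G] (f : G → ℂ) : Prop :=
  ∃ V : FDRep ℂ G, CategoryTheory.Simple V ∧ FDRep.character V = f

/-!
Over `F[X]` an invertible operator is classified by its elementary divisors `p ^ e`. Collecting the
product `hₖ` of the `p` occurring with exponent `e = k` encodes the conjugacy class as a family of
monic polynomials prime to `X` with `∑ k * deg hₖ = n`. There are `q ^ n - q ^ (n - 1)` monic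
polynomials of degree `n > 0` prime to `X`, so these families are counted by the coefficients of
`∏ₖ (1 - t ^ k) / (1 - q t ^ k)`. By induction on `N`, the partial product over `k ≤ N` is bounded
coefficientwise by `(1 - t ^ N) / (1 - q t)`, hence by `∑ q ^ n t ^ n`.

Irreducible characters are orthonormal, hence linearly independent, class functions, so there are at
most as many of them as conjugacy classes.
-/

section Characters

open CategoryTheory

variable (k G : Type*) [Field k] [Group G]

/-- The set of characters of irreducible finite-dimensional representations of `G` over `k`. -/
def irreducibleCharacters : Set (G → k) :=
  {χ | ∃ V : FDRep k G, Simple V ∧ V.character = χ}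

variable {k G} in
/-- The functional `φ ↦ |G|⁻¹ ∑ φ(g) ψ(g⁻¹)` on functions on `G`: the bilinear form for which
irreducible characters are orthonormal, with its second argument fixed. -/
noncomputable def characterPairing [Fintype G] (ψ : G → k) : Module.Dual k (G → k) :=
  (Nat.card G : k)⁻¹ • ∑ g, ψ g⁻¹ • LinearMap.proj g

variable {k G} in
theorem characterPairing_apply [Fintype G] (ψ φ : G → k) :
    characterPairing ψ φ = (Nat.card G : k)⁻¹ * ∑ g, φ g * ψ g⁻¹ := by
  simp [characterPairing, LinearMap.sum_apply, mul_comm]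

theorem linearIndependent_irreducibleCharacters [IsAlgClosed k] [Finite G]
    [NeZero (Nat.card G : k)] :
    LinearIndependent k ((↑) : irreducibleCharacters k G → G → k) := by
  have := Fintype.ofFinite G
  have := invertibleOfNonzero (NeZero.ne (Nat.card G : k))
  refine .of_pairwise_dual_eq_zero_one _ (fun ψ => characterPairing ψ.1) ?_ ?_
  · rintro ⟨_, W, hW, rfl⟩ ⟨_, V, hV, rfl⟩ hne
    rw [characterPairing_apply, FDRep.char_orthonormal V W, if_neg]
    rintro ⟨i⟩
    exact hne (Subtype.ext (FDRep.char_iso i).symm)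
  · rintro ⟨_, V, hV, rfl⟩
    rw [characterPairing_apply, FDRep.char_orthonormal V V, if_pos ⟨Iso.refl V⟩]

theorem exists_comp_conjClasses_mk_eq_character (V : FDRep k G) :
    ∃ φ : ConjClasses G → k, φ ∘ ConjClasses.mk = V.character := by
  refine ⟨Quotient.lift V.character fun g h hgh => ?_, rfl⟩
  obtain ⟨c, rfl⟩ := isConj_iff.1 hgh
  exact (V.char_conj g c).symm

theorem card_irreducibleCharacters_le [IsAlgClosed k] [Finite G] [NeZero (Nat.card G : k)] :
    Nat.card (irreducibleCharacters k G) ≤ Nat.card (ConjClasses G) := by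
  have class_function (χ : irreducibleCharacters k G) :
      ∃ φ : ConjClasses G → k, φ ∘ ConjClasses.mk = χ.1 := by
    obtain ⟨_, V, -, rfl⟩ := χ
    exact exists_comp_conjClasses_mk_eq_character k G V
  choose φ hφ using class_function
  have hφ_indep : LinearIndependent k φ := by
    refine .of_comp (LinearMap.funLeft k k ConjClasses.mk) ?_
    rw [show LinearMap.funLeft k k ConjClasses.mk ∘ φ = Subtype.val from funext hφ]
    exact linearIndependent_irreducibleCharacters k G
  have := Fintype.ofFinite (ConjClasses G)
  have := hφ_indep.finite
  have := Fintype.ofFinite (irreducibleCharacters k G)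
  simpa using hφ_indep.fintype_card_le_finrank

end Characters

section Series
open PowerSeries

theorem mk_pow_mul_one_sub_C_mul_X {R : Type*} [CommRing R] (q : R) :
    mk (q ^ ·) * (1 - C q * X) = 1 := by
  have h := congrArg (rescale q) (mk_one_mul_one_sub_eq_one R)
  simpa [rescale_mk] using h

section Ordered

theorem coeff_mul_nonneg {R : Type*} [Semiring R] [PartialOrder R] [IsOrderedRing R] {f g : R⟦X⟧}
    (hf : ∀ n, 0 ≤ coeff n f) (hg : ∀ n, 0 ≤ coeff n g) (n : ℕ) : 0 ≤ coeff n (f * g) := by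
  rw [coeff_mul]
  exact Finset.sum_nonneg fun i _ => mul_nonneg (hf i.1) (hg i.2)

variable {R : Type*} [CommRing R] [PartialOrder R] [IsOrderedRing R] {q : R} {g : ℕ → R⟦X⟧}

theorem coeff_geometric_sub_prod_nonneg (hg : ∀ k n, 0 ≤ coeff n (g k))
    (hgq : ∀ k ≠ 0, g k * (1 - C q * X ^ k) = 1 - X ^ k) (N n : ℕ) :
    0 ≤ coeff n ((1 - X ^ (N + 1)) * mk (q ^ ·) - ∏ k ∈ Finset.Icc 1 (N + 1), g k) := by
  have geom := mk_pow_mul_one_sub_C_mul_X q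
  induction N generalizing n with
  | zero =>
    have base : (1 - X ^ (0 + 1)) * mk (q ^ ·) = ∏ k ∈ Finset.Icc 1 (0 + 1), g k := by
      simp only [zero_add, Finset.Icc_self, Finset.prod_singleton]
      linear_combination g 1 * geom - mk (q ^ ·) * hgq 1 one_ne_zero
    rw [base, sub_self, map_zero]
  | succ N ih =>
    -- `(1 - X ^ N) / (1 - q X) + X ^ N = (1 - q X ^ (N + 1)) / (1 - q X)`, and the numerator on
    -- the right cancels the denominator of the next factor.
    have step : (1 - X ^ (N + 1 + 1)) * mk (q ^ ·) - ∏ k ∈ Finset.Icc 1 (N + 1 + 1), g k =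
        ((1 - X ^ (N + 1)) * mk (q ^ ·) - ∏ k ∈ Finset.Icc 1 (N + 1), g k) * g (N + 1 + 1) +
          X ^ (N + 1) * g (N + 1 + 1) := by
      rw [Finset.prod_Icc_succ_top (by lia)]
      linear_combination X ^ (N + 1) * g (N + 1 + 1) * geom -
        mk (q ^ ·) * hgq (N + 1 + 1) (by lia)
    rw [step, map_add, coeff_X_pow_mul']
    have := coeff_mul_nonneg ih (hg (N + 1 + 1)) n
    have := hg (N + 1 + 1) (n - (N + 1))
    split_ifs <;> positivity

theorem coeff_prod_le_pow (hq : 0 ≤ q) (hg : ∀ k n, 0 ≤ coeff n (g k))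
    (hgq : ∀ k ≠ 0, g k * (1 - C q * X ^ k) = 1 - X ^ k) (N n : ℕ) :
    coeff n (∏ k ∈ Finset.Icc 1 (N + 1), g k) ≤ q ^ n := by
  have bound := coeff_geometric_sub_prod_nonneg hg hgq N n
  rw [sub_mul, one_mul, map_sub, map_sub, coeff_mk, coeff_X_pow_mul'] at bound
  refine (sub_nonneg.1 bound).trans (sub_le_self _ ?_)
  split_ifs <;> simp [hq]

end Ordered

variable (R : Type*) {α : Type*}

/-- The generating function `∑ₐ X ^ w a` of a weight `w`, whose `n`-th coefficient counts the
elements of weight `n` (an infinite fibre of `w` contributes `0`). -/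
noncomputable def weightSeries [Semiring R] (w : α → ℕ) : R⟦X⟧ :=
  mk fun n => (Nat.card {a // w a = n} : R)

theorem coeff_weightSeries [Semiring R] (w : α → ℕ) (n : ℕ) :
    coeff n (weightSeries R w) = Nat.card {a // w a = n} :=
  coeff_mk _ _

theorem weightSeries_mul_left [CommRing R] {k : ℕ} (hk : k ≠ 0) (w : α → ℕ) :
    weightSeries R (fun a => k * w a) = expand k hk (weightSeries R w) := by
  ext n
  rw [coeff_expand]
  split_ifs with hkn
  · obtain ⟨m, rfl⟩ := hkn
    simp [coeff_weightSeries, Nat.mul_div_cancel_left m (Nat.pos_of_ne_zero hk), hk]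
  · have : IsEmpty {a // k * w a = n} := ⟨fun a => hkn ⟨_, a.2.symm⟩⟩
    simp [coeff_weightSeries]

theorem finite_mul_weight_eq {k : ℕ} (hk : k ≠ 0) (w : α → ℕ)
    (hw : ∀ n, Finite {a // w a = n}) (n : ℕ) : Finite {a // k * w a = n} := by
  have := hw (n / k)
  exact .of_injective (β := {a // w a = n / k})
    (fun a => ⟨a.1, Nat.eq_div_of_mul_eq_right hk a.2⟩) fun _ _ h => Subtype.ext (Subtype.mk.inj h)

variable {ι : Type*} [Fintype ι] {β : ι → Type*}

/-- A tuple of total weight `n` amounts to a composition of `n` into weights together with an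
element of each prescribed weight. -/
noncomputable def sumWeightEquiv [DecidableEq ι] (w : ∀ i, β i → ℕ) (n : ℕ) :
    {b : ∀ i, β i // ∑ i, w i (b i) = n} ≃
      Σ l : Finset.finsuppAntidiag (Finset.univ : Finset ι) n, ∀ i, {b // w i b = l.1 i} where
  toFun b := ⟨⟨Finsupp.equivFunOnFinite.symm fun i => w i (b.1 i), by simpa using b.2⟩,
    fun i => ⟨b.1 i, rfl⟩⟩
  invFun b := ⟨fun i => (b.2 i).1, by
    simpa [(b.2 _).2] using (Finset.mem_finsuppAntidiag.1 b.1.2).1⟩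
  left_inv _ := rfl
  right_inv := by
    rintro ⟨⟨l, hl⟩, b⟩
    obtain ⟨c, hc, rfl⟩ : ∃ (c : ∀ i, β i) (hc : ∀ i, w i (c i) = l i), b = fun i => ⟨c i, hc i⟩ :=
      ⟨fun i => (b i).1, fun i => (b i).2, rfl⟩
    obtain rfl : l = Finsupp.equivFunOnFinite.symm fun i => w i (c i) :=
      Finsupp.ext fun i => (hc i).symm
    rfl

theorem finite_sum_weight_eq (w : ∀ i, β i → ℕ) (hw : ∀ i n, Finite {b // w i b = n}) (n : ℕ) :
    Finite {b : ∀ i, β i // ∑ i, w i (b i) = n} := by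
  classical
  exact .of_equiv _ (sumWeightEquiv w n).symm

theorem coeff_prod_weightSeries [CommSemiring R] (w : ∀ i, β i → ℕ)
    (hw : ∀ i n, Finite {b // w i b = n}) (n : ℕ) :
    coeff n (∏ i, weightSeries R (w i)) = Nat.card {b : ∀ i, β i // ∑ i, w i (b i) = n} := by
  classical
  simp only [coeff_prod, coeff_weightSeries]
  rw [Nat.card_congr (sumWeightEquiv w n), Nat.card_sigma, ← Finset.sum_coe_sort]
  simp [Nat.card_pi]

end Series

section Counting

open Polynomial

variable (F : Type*) [Field F]

/-- The monic polynomials prime to `X`: products of the irreducible polynomials that can occur in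
the elementary divisors of an invertible operator. -/
def monicPrimeToX : Submonoid F[X] where
  carrier := {p | p.Monic ∧ p.coeff 0 ≠ 0}
  one_mem' := ⟨monic_one, by simp⟩
  mul_mem' hp hr := ⟨hp.1.mul hr.1, by simpa [mul_coeff_zero] using ⟨hp.2, hr.2⟩⟩

/-- A monic polynomial of degree `n` is determined by its `n` lower coefficients. -/
noncomputable def monicEquivFun (R : Type*) [Ring R] [Nontrivial R] (n : ℕ) :
    {p : R[X] // p.Monic ∧ p.natDegree = n} ≃ (Fin n → R) :=
  (monicEquivDegreeLT n).trans (degreeLTEquiv R n).toEquiv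

theorem monicEquivFun_apply {R : Type*} [Ring R] [Nontrivial R] {n : ℕ}
    (p : {p : R[X] // p.Monic ∧ p.natDegree = n}) (i : Fin n) :
    monicEquivFun R n p i = p.1.coeff i :=
  eraseLead_coeff_of_ne _ (by have := p.2.2; lia)

/-- The elements of `monicPrimeToX F` of degree `n`, as a subtype of the monic polynomials. -/
def monicPrimeToXEquiv (n : ℕ) : {p : monicPrimeToX F // p.1.natDegree = n} ≃
    {p : {p : F[X] // p.Monic ∧ p.natDegree = n} // p.1.coeff 0 ≠ 0} where
  toFun p := ⟨⟨p.1.1, p.1.2.1, p.2⟩, p.1.2.2⟩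
  invFun p := ⟨⟨p.1.1, p.1.2.1, p.2⟩, p.1.2.2⟩

theorem finite_monicPrimeToX_natDegree_eq [Finite F] (n : ℕ) :
    Finite {p : monicPrimeToX F // p.1.natDegree = n} := by
  have : Finite {p : F[X] // p.Monic ∧ p.natDegree = n} := .of_equiv _ (monicEquivFun F n).symm
  exact .of_equiv _ (monicPrimeToXEquiv F n).symm

theorem card_monicPrimeToX_natDegree_eq_zero :
    Nat.card {p : monicPrimeToX F // p.1.natDegree = 0} = 1 := by
  have : Unique {p : monicPrimeToX F // p.1.natDegree = 0} :=
    { default := ⟨1, natDegree_one⟩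
      uniq := fun p => Subtype.ext (Subtype.ext (p.1.2.1.natDegree_eq_zero.1 p.2)) }
  exact Nat.card_unique

/-- Families `(h₁, …, h_N)` of monic polynomials prime to `X` with `∑ k * deg hₖ = n`. -/
abbrev DivisorFamily (N n : ℕ) : Type _ :=
  {h : Finset.Icc 1 N → monicPrimeToX F // ∑ k, k.1 * (h k).1.natDegree = n}

theorem finite_mul_natDegree_eq [Finite F] {N : ℕ} (k : Finset.Icc 1 N) (n : ℕ) :
    Finite {p : monicPrimeToX F // k.1 * p.1.natDegree = n} :=
  finite_mul_weight_eq (Nat.one_le_iff_ne_zero.1 (Finset.mem_Icc.1 k.2).1) _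
    (finite_monicPrimeToX_natDegree_eq F) n

theorem finite_divisorFamily [Finite F] (N n : ℕ) : Finite (DivisorFamily F N n) :=
  finite_sum_weight_eq _ (finite_mul_natDegree_eq F) n

variable [Fintype F]

theorem card_monicPrimeToX_natDegree_eq_succ (n : ℕ) :
    Nat.card {p : monicPrimeToX F // p.1.natDegree = n + 1} =
      (Fintype.card F - 1) * Fintype.card F ^ n := by
  classical
  calc Nat.card {p : monicPrimeToX F // p.1.natDegree = n + 1}
      = Nat.card {v : Fin (n + 1) → F // v 0 ≠ 0} :=
        Nat.card_congr ((monicPrimeToXEquiv F _).trans ((monicEquivFun F (n + 1)).subtypeEquiv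
          fun p => by rw [monicEquivFun_apply, Fin.val_zero]))
    _ = Nat.card {v : F × (Fin n → F) // v.1 ≠ 0} :=
        Nat.card_congr ((Fin.consEquiv fun _ => F).symm.subtypeEquiv fun _ => Iff.rfl)
    _ = Nat.card ({a : F // a ≠ 0} × (Fin n → F)) :=
        Nat.card_congr (Equiv.prodSubtypeFstEquivSubtypeProd (p := fun a : F => a ≠ 0))
    _ = (Fintype.card F - 1) * Fintype.card F ^ n := by simp

theorem weightSeries_natDegree_mul_one_sub :
    weightSeries ℤ (fun p : monicPrimeToX F => p.1.natDegree) *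
      (1 - PowerSeries.C (Fintype.card F : ℤ) * PowerSeries.X) = 1 - PowerSeries.X := by
  have card_sub_one : ((Fintype.card F - 1 : ℕ) : ℤ) = Fintype.card F - 1 := by
    simp [Fintype.card_pos]
  rw [mul_sub, mul_one, mul_left_comm]
  ext (_ | _ | n)
  · rw [map_sub, PowerSeries.coeff_C_mul, PowerSeries.coeff_zero_mul_X, coeff_weightSeries,
      card_monicPrimeToX_natDegree_eq_zero]
    simp
  · rw [map_sub, map_sub, PowerSeries.coeff_C_mul, PowerSeries.coeff_succ_mul_X,
      coeff_weightSeries, coeff_weightSeries, card_monicPrimeToX_natDegree_eq_succ,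
      card_monicPrimeToX_natDegree_eq_zero]
    simp [PowerSeries.coeff_one, card_sub_one]
  · rw [map_sub, map_sub, PowerSeries.coeff_C_mul, PowerSeries.coeff_succ_mul_X,
      coeff_weightSeries, coeff_weightSeries, card_monicPrimeToX_natDegree_eq_succ,
      card_monicPrimeToX_natDegree_eq_succ]
    simp [PowerSeries.coeff_one, PowerSeries.coeff_X, pow_succ', mul_left_comm]

theorem weightSeries_mul_natDegree_mul_one_sub {k : ℕ} (hk : k ≠ 0) :
    weightSeries ℤ (fun p : monicPrimeToX F => k * p.1.natDegree) *
      (1 - PowerSeries.C (Fintype.card F : ℤ) * PowerSeries.X ^ k) = 1 - PowerSeries.X ^ k := by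
  have h := congrArg (PowerSeries.expand k hk) (weightSeries_natDegree_mul_one_sub F)
  simpa only [weightSeries_mul_left ℤ hk, map_mul, map_sub, map_one, PowerSeries.expand_C,
    PowerSeries.expand_X] using h

theorem card_divisorFamily_le (N n : ℕ) :
    Nat.card (DivisorFamily F (N + 1) n) ≤ Fintype.card F ^ n := by
  have count := coeff_prod_weightSeries ℤ
    (fun (k : Finset.Icc 1 (N + 1)) (p : monicPrimeToX F) => k.1 * p.1.natDegree)
    (finite_mul_natDegree_eq F) n
  have bound := coeff_prod_le_pow (q := (Fintype.card F : ℤ)) (by positivity)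
    (fun k m => by rw [coeff_weightSeries]; positivity)
    (fun k hk => weightSeries_mul_natDegree_mul_one_sub F hk) N n
  rw [← Finset.prod_coe_sort, count] at bound
  exact_mod_cast bound

end Counting

section ElementaryDivisors

section PrimaryModule

theorem bijective_pi_restrict {R ι : Type*} [Semiring R] {M : ι → Type*}
    [∀ i, AddCommMonoid (M i)] [∀ i, Module R (M i)] (s : Set ι)
    (hs : ∀ i ∉ s, Subsingleton (M i)) :
    Function.Bijective
      (LinearMap.pi fun i : s => LinearMap.proj i.1 : (∀ i, M i) →ₗ[R] ∀ i : s, M i) := by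
  classical
  refine ⟨fun x y hxy => funext fun i => ?_, fun y => ?_⟩
  · by_cases hi : i ∈ s
    · exact congrFun hxy ⟨i, hi⟩
    · exact (hs i hi).elim _ _
  · exact ⟨fun i => if hi : i ∈ s then y ⟨i, hi⟩ else 0, funext fun i => dif_pos i.2⟩

variable {R : Type*} [CommRing R]

open Classical in
/-- The direct sum of the modules `R ⧸ (p ^ e)` over the pairs `(p, e)` of a multiset, with
multiplicity. -/
abbrev PrimaryModule (D : Multiset (R × ℕ)) : Type _ :=
  ∀ c : D, R ⧸ Ideal.span {c.1.1 ^ c.1.2}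

open Classical in
theorem nonempty_pi_equiv_primaryModule {ι : Type*} [Fintype ι] (c : ι → R × ℕ) :
    Nonempty ((∀ i, R ⧸ Ideal.span {(c i).1 ^ (c i).2}) ≃ₗ[R]
      PrimaryModule (Finset.univ.val.map c)) := by
  have card_fiber (x : R × ℕ) :
      Fintype.card {i // c i = x} = (Finset.univ.val.map c).count x := by
    rw [Multiset.count_map, Fintype.card_subtype, Finset.card, Finset.filter_val]
    simp only [eq_comm]
  let σ : ι ≃ Finset.univ.val.map c := (Equiv.sigmaFiberEquiv c).symm.trans
    (Equiv.sigmaCongrRight fun x => Fintype.equivFinOfCardEq (card_fiber x))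
  exact ⟨LinearEquiv.piCongrLeft R
    (fun x : Finset.univ.val.map c => R ⧸ Ideal.span {x.1.1 ^ x.1.2}) σ⟩

theorem exists_equiv_primaryModule [IsDomain R] [IsPrincipalIdealRing R] [NormalizationMonoid R]
    {M : Type*} [AddCommGroup M] [Module R M] [Module.Finite R M] (hM : Module.IsTorsion R M) :
    ∃ D : Multiset (R × ℕ),
      (∀ c ∈ D, Irreducible c.1 ∧ normalize c.1 = c.1 ∧ c.2 ≠ 0) ∧
        Nonempty (M ≃ₗ[R] PrimaryModule D) := by
  classical
  obtain ⟨ι, _, p, hp, e, ⟨φ⟩⟩ := Module.equiv_directSum_of_isTorsion hM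
  let s : Set ι := {i | e i ≠ 0}
  have trivial_summand (i : ι) (hi : i ∉ s) : Subsingleton (R ⧸ Ideal.span {p i ^ e i}) := by
    rw [not_not.1 hi, pow_zero, Ideal.span_singleton_one]
    exact Ideal.Quotient.subsingleton_iff.2 rfl
  have normalize_summand (i : s) :
      Ideal.span {p i ^ e i} = Ideal.span {normalize (p i) ^ e i} :=
    Ideal.span_singleton_eq_span_singleton.2 (associated_normalize (p i)).pow_pow
  let c : s → R × ℕ := fun i => (normalize (p i), e i)
  obtain ⟨ψ⟩ := nonempty_pi_equiv_primaryModule c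
  refine ⟨Finset.univ.val.map c, ?_, ⟨φ ≪≫ₗ DirectSum.linearEquivFunOnFintype R ι _ ≪≫ₗ
    LinearEquiv.ofBijective _ (bijective_pi_restrict s trivial_summand) ≪≫ₗ
    LinearEquiv.piCongrRight (fun i => Submodule.quotEquivOfEq _ _ (normalize_summand i)) ≪≫ₗ ψ⟩⟩
  intro x hx
  obtain ⟨i, -, rfl⟩ := Multiset.mem_map.1 hx
  exact ⟨(associated_normalize _).irreducible (hp i), normalize_idem _, i.2⟩

open Classical in
theorem finrank_primaryModule (K : Type*) [Field K] [Algebra K R] {D : Multiset (R × ℕ)}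
    (hD : ∀ c ∈ D, Module.Finite K (R ⧸ Ideal.span {c.1 ^ c.2})) :
    Module.finrank K (PrimaryModule D) =
      (D.map fun c => Module.finrank K (R ⧸ Ideal.span {c.1 ^ c.2})).sum := by
  have (c : D) := hD c.1 Multiset.coe_mem
  rw [Module.finrank_pi_fintype, ← Finset.sum_map_val, ← Multiset.map_univ D]

theorem isCoprime_of_surjective_smul {D : Multiset (R × ℕ)} {r : R}
    (hr : Function.Surjective (r • · : PrimaryModule D → PrimaryModule D)) {c : R × ℕ}
    (hc : c ∈ D) (hc0 : c.2 ≠ 0) : IsCoprime r c.1 := by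
  classical
  obtain ⟨v, hv⟩ := hr 1
  let i : D := D.mkToType c ⟨0, Multiset.count_pos.2 hc⟩
  obtain ⟨s, hs⟩ := Ideal.Quotient.mk_surjective (v i)
  have h_one : Ideal.Quotient.mk (Ideal.span {c.1 ^ c.2}) (r * s) = Ideal.Quotient.mk _ 1 := by
    rw [map_mul, hs, map_one]
    exact congrFun hv i
  obtain ⟨t, ht⟩ := Ideal.mem_span_singleton.1 (Ideal.Quotient.eq.1 h_one)
  have h_coprime : IsCoprime r (c.1 ^ c.2) := ⟨s, -t, by linear_combination ht⟩
  exact (IsCoprime.pow_right_iff (Nat.pos_of_ne_zero hc0)).1 h_coprime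

end PrimaryModule

section ExponentPart

variable {α : Type*}

/-- The multiset of those `p` for which `(p, k)` belongs to `D`, with multiplicity. -/
def exponentPart (D : Multiset (α × ℕ)) (k : ℕ) : Multiset α :=
  (D.filter (·.2 = k)).map Prod.fst

theorem mem_exponentPart {D : Multiset (α × ℕ)} {k : ℕ} {a : α} :
    a ∈ exponentPart D k ↔ (a, k) ∈ D := by
  simp [exponentPart]

theorem count_exponentPart [DecidableEq α] (D : Multiset (α × ℕ)) (k : ℕ) (a : α) :
    (exponentPart D k).count a = D.count (a, k) := by
  rw [exponentPart, Multiset.count_map, Multiset.filter_filter, Multiset.count_eq_card_filter_eq]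
  exact congrArg _ (Multiset.filter_congr fun c _ => by simp [Prod.ext_iff, eq_comm (a := k)])

theorem sum_exponentPart {M : Type*} [AddCommMonoid M] (f : ℕ → α → M) {D : Multiset (α × ℕ)}
    {s : Finset ℕ} (hs : ∀ c ∈ D, c.2 ∈ s) :
    ∑ k ∈ s, ((exponentPart D k).map (f k)).sum = (D.map fun c => f c.2 c.1).sum := by
  induction D using Multiset.induction with
  | empty => simp [exponentPart]
  | cons c D ih =>
    rw [Multiset.forall_mem_cons] at hs
    have part_cons (k : ℕ) : ((exponentPart (c ::ₘ D) k).map (f k)).sum =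
        (if c.2 = k then f k c.1 else 0) + ((exponentPart D k).map (f k)).sum := by
      split_ifs with h <;> simp [exponentPart, h]
    simp [part_cons, Finset.sum_add_distrib, ih hs.2, hs.1]

theorem normalizedFactors_prod_exponentPart [CommMonoidWithZero α] [NormalizationMonoid α]
    [UniqueFactorizationMonoid α] {D : Multiset (α × ℕ)}
    (hD : ∀ c ∈ D, Irreducible c.1 ∧ normalize c.1 = c.1) (k : ℕ) :
    UniqueFactorizationMonoid.normalizedFactors (exponentPart D k).prod = exponentPart D k := by
  rw [UniqueFactorizationMonoid.normalizedFactors_prod_eq _ fun a ha =>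
    (hD _ (mem_exponentPart.1 ha)).1]
  exact (Multiset.map_congr rfl fun a ha => (hD _ (mem_exponentPart.1 ha)).2).trans
    (Multiset.map_id _)

theorem eq_of_prod_exponentPart_eq [CommMonoidWithZero α] [NormalizationMonoid α]
    [UniqueFactorizationMonoid α] {D D' : Multiset (α × ℕ)}
    (hD : ∀ c ∈ D, Irreducible c.1 ∧ normalize c.1 = c.1)
    (hD' : ∀ c ∈ D', Irreducible c.1 ∧ normalize c.1 = c.1)
    (h : ∀ k, (exponentPart D k).prod = (exponentPart D' k).prod) : D = D' := by
  classical
  ext ⟨a, k⟩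
  rw [← count_exponentPart, ← count_exponentPart, ← normalizedFactors_prod_exponentPart hD, h,
    normalizedFactors_prod_exponentPart hD']

end ExponentPart

section Operators

open Polynomial Module

theorem card_conjClasses_le_of_isConj {G T : Type*} [Monoid G] [Finite T] (φ : G → T)
    (hφ : ∀ a b, φ a = φ b → IsConj a b) : Nat.card (ConjClasses G) ≤ Nat.card T := by
  refine Nat.card_le_card_of_injective (fun c => φ (Quotient.out c)) fun c d hcd => ?_
  rw [← Quotient.out_eq c, ← Quotient.out_eq d]
  exact Quotient.sound (hφ _ _ hcd)

theorem isConj_of_aeval_equiv {R M : Type*} [CommRing R] [AddCommGroup M] [Module R M]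
    {f g : M ≃ₗ[R] M}
    (φ : AEval' (f : End R M) ≃ₗ[R[X]] AEval' (g : End R M)) : IsConj f g := by
  let ψ : M ≃ₗ[R] M := AEval'.of (f : End R M) ≪≫ₗ φ.restrictScalars R ≪≫ₗ
    (AEval'.of (g : End R M)).symm
  refine isConj_iff.2 ⟨ψ, mul_inv_eq_iff_eq_mul.2 (LinearEquiv.ext fun v => ?_)⟩
  have h := φ.map_smul (X : R[X]) (AEval'.of (f : End R M) v)
  rw [AEval'.X_smul_of] at h
  exact (congrArg (AEval'.of (g : End R M)).symm h).trans (AEval.of_symm_X_smul ..)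

variable {F V : Type*} [Field F] [AddCommGroup V] [Module F V]

/-- `D` lists the elementary divisors `p ^ e` of the operator `f` as pairs `(p, e)` with `p` monic
irreducible and `e ≠ 0`. -/
structure HasElementaryDivisors (f : End F V) (D : Multiset (F[X] × ℕ)) : Prop where
  irreducible : ∀ c ∈ D, Irreducible c.1
  monic : ∀ c ∈ D, c.1.Monic
  exponent_ne_zero : ∀ c ∈ D, c.2 ≠ 0
  nonempty_equiv : Nonempty (AEval' f ≃ₗ[F[X]] PrimaryModule D)

theorem exists_hasElementaryDivisors [FiniteDimensional F V] (f : End F V) :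
    ∃ D, HasElementaryDivisors f D := by
  classical
  obtain ⟨D, hD, hφ⟩ :=
    exists_equiv_primaryModule (AEval.isTorsion_of_finiteDimensional F V f)
  refine ⟨D, fun c hc => (hD c hc).1, fun c hc => ?_, fun c hc => (hD c hc).2.2, hφ⟩
  rw [← (hD c hc).2.1]
  exact monic_normalize (hD c hc).1.ne_zero

theorem finrank_primaryModule_of_monic {D : Multiset (F[X] × ℕ)} (hD : ∀ c ∈ D, c.1.Monic) :
    finrank F (PrimaryModule D) = (D.map fun c => c.2 * c.1.natDegree).sum := by
  rw [finrank_primaryModule F fun c hc => ((hD c hc).pow _).finite_quotient]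
  simp only [finrank_quotient_span_eq_natDegree, natDegree_pow]

namespace HasElementaryDivisors

theorem isConj {f g : V ≃ₗ[F] V} {D : Multiset (F[X] × ℕ)}
    (hf : HasElementaryDivisors (f : End F V) D) (hg : HasElementaryDivisors (g : End F V) D) :
    IsConj f g := by
  obtain ⟨φ⟩ := hf.nonempty_equiv
  obtain ⟨ψ⟩ := hg.nonempty_equiv
  exact isConj_of_aeval_equiv (φ ≪≫ₗ ψ.symm)

variable {f : End F V} {D : Multiset (F[X] × ℕ)}

open Classical in
theorem irreducible_and_normalized (h : HasElementaryDivisors f D) :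
    ∀ c ∈ D, Irreducible c.1 ∧ normalize c.1 = c.1 :=
  fun c hc => ⟨h.irreducible c hc, (h.monic c hc).normalize_eq_self⟩

theorem sum_eq_finrank (h : HasElementaryDivisors f D) :
    (D.map fun c => c.2 * c.1.natDegree).sum = finrank F V := by
  obtain ⟨φ⟩ := h.nonempty_equiv
  rw [← finrank_primaryModule_of_monic h.monic, ← (φ.restrictScalars F).finrank_eq,
    (AEval'.of f).finrank_eq]

theorem exponent_mem_Icc (h : HasElementaryDivisors f D) {c : F[X] × ℕ} (hc : c ∈ D) :
    c.2 ∈ Finset.Icc 1 (finrank F V + 1) := by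
  have hle : c.2 * c.1.natDegree ≤ finrank F V := h.sum_eq_finrank ▸
    Multiset.single_le_sum (by simp) _ (Multiset.mem_map_of_mem _ hc)
  have := Nat.le_mul_of_pos_right c.2 (h.irreducible c hc).natDegree_pos
  have := h.exponent_ne_zero c hc
  exact Finset.mem_Icc.2 (by lia)

theorem mem_monicPrimeToX (h : HasElementaryDivisors f D) (hf : Function.Surjective f)
    {c : F[X] × ℕ} (hc : c ∈ D) : c.1 ∈ monicPrimeToX F := by
  obtain ⟨φ⟩ := h.nonempty_equiv
  have hX : Function.Surjective ((X : F[X]) • · : PrimaryModule D → PrimaryModule D) := by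
    intro w
    obtain ⟨v, hv⟩ := hf ((AEval'.of f).symm (φ.symm w))
    refine ⟨φ (AEval'.of f v), ?_⟩
    simp only [← map_smul, AEval'.X_smul_of, hv, LinearEquiv.apply_symm_apply]
  have h_coprime := isCoprime_of_surjective_smul hX hc (h.exponent_ne_zero c hc)
  refine ⟨h.monic c hc, fun h0 => not_isUnit_X (R := F) ?_⟩
  exact h_coprime.isUnit_of_dvd (X_dvd_iff.2 h0)

theorem exists_divisorFamily (h : HasElementaryDivisors f D) (hf : Function.Surjective f) :
    ∃ H : DivisorFamily F (finrank F V + 1) (finrank F V),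
      ∀ k, (H.1 k).1 = (exponentPart D k).prod := by
  have h_mem (k : ℕ) : (exponentPart D k).prod ∈ monicPrimeToX F :=
    multiset_prod_mem _ fun p hp => h.mem_monicPrimeToX hf (mem_exponentPart.1 hp)
  have h_natDegree (k : ℕ) : k * (exponentPart D k).prod.natDegree =
      ((exponentPart D k).map fun p => k * p.natDegree).sum := by
    rw [natDegree_multiset_prod_of_monic _ fun p hp => h.monic _ (mem_exponentPart.1 hp),
      Multiset.sum_map_mul_left]
  refine ⟨⟨fun k => ⟨_, h_mem k⟩, ?_⟩, fun k => rfl⟩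
  simp only [h_natDegree]
  rw [Finset.sum_coe_sort _ fun k => ((exponentPart D k).map fun p => k * p.natDegree).sum,
    sum_exponentPart _ fun c hc => h.exponent_mem_Icc hc, h.sum_eq_finrank]

theorem eq_of_prod_exponentPart_eq {g : End F V} {D' : Multiset (F[X] × ℕ)}
    (h : HasElementaryDivisors f D) (h' : HasElementaryDivisors g D')
    (heq : ∀ k ∈ Finset.Icc 1 (finrank F V + 1),
      (exponentPart D k).prod = (exponentPart D' k).prod) : D = D' := by
  classical
  refine _root_.eq_of_prod_exponentPart_eq h.irreducible_and_normalized
    h'.irreducible_and_normalized fun k => ?_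
  by_cases hk : k ∈ Finset.Icc 1 (finrank F V + 1)
  · exact heq k hk
  · have part_empty {f : End F V} {D} (h : HasElementaryDivisors f D) : exponentPart D k = 0 :=
      Multiset.eq_zero_of_forall_notMem fun p hp =>
        hk (h.exponent_mem_Icc (mem_exponentPart.1 hp))
    rw [part_empty h, part_empty h']

end HasElementaryDivisors

variable (F V) in
theorem card_conjClasses_linearEquiv_le [Fintype F] [FiniteDimensional F V] :
    Nat.card (ConjClasses (V ≃ₗ[F] V)) ≤ Fintype.card F ^ finrank F V := by
  choose D hD using fun f : V ≃ₗ[F] V => exists_hasElementaryDivisors (f : End F V)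
  choose H hH using fun f : V ≃ₗ[F] V => (hD f).exists_divisorFamily f.surjective
  have := finite_divisorFamily F (finrank F V + 1) (finrank F V)
  refine (card_conjClasses_le_of_isConj H fun f g hfg => (hD f).isConj ?_).trans
    (card_divisorFamily_le F _ _)
  rw [(hD f).eq_of_prod_exponentPart_eq (hD g) fun k hk => ?_]
  · exact hD g
  · rw [← hH f ⟨k, hk⟩, ← hH g ⟨k, hk⟩, hfg]

theorem card_conjClasses_GL_le_pow (F m : Type*) [Field F] [Fintype F] [Fintype m]
    [DecidableEq m] :
    Nat.card (ConjClasses (GL m F)) ≤ Fintype.card F ^ Fintype.card m := by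
  let e : GL m F ≃* ((m → F) ≃ₗ[F] (m → F)) :=
    Matrix.GeneralLinearGroup.toLin.trans (LinearMap.GeneralLinearGroup.generalLinearEquiv F _)
  have : Finite ((m → F) ≃ₗ[F] (m → F)) := .of_equiv _ e.toEquiv
  calc Nat.card (ConjClasses (GL m F))
      ≤ Nat.card (ConjClasses ((m → F) ≃ₗ[F] (m → F))) :=
        Nat.card_le_card_of_surjective (ConjClasses.map e.symm.toMonoidHom)
          (ConjClasses.map_surjective e.symm.surjective)
    _ ≤ Fintype.card F ^ finrank F (m → F) := card_conjClasses_linearEquiv_le F (m → F)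
    _ = Fintype.card F ^ Fintype.card m := by rw [finrank_fintype_fun_eq_card]

end Operators

end ElementaryDivisors

theorem card_conjClasses_GL_le
    (q : ℕ) (hq : IsPrimePow q)
    (F : Type) [Field F] [Fintype F] (hFq : Fintype.card F = q)
    (n : ℕ) (hn : 0 < n) :
    Nat.card (ConjClasses (GL (Fin n) F)) ≤ q ^ n ∧
      Nat.card {χ : GL (Fin n) F → ℂ // IsIrrChar _ χ} ≤ q ^ n := by
  have card_classes : Nat.card (ConjClasses (GL (Fin n) F)) ≤ q ^ n := by
    simpa [hFq] using card_conjClasses_GL_le_pow F (Fin n)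
  exact ⟨card_classes, (card_irreducibleCharacters_le ℂ (GL (Fin n) F)).trans card_classes⟩
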